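/- With the special parameter choice 2α_j/α_{j−1} = √((j−1)(N−j+1)) for j = 2,…,N, let P(·,n) be the monic MVOPs of the weight W(x) = e^{−x²}L(x)L(x)* with squared norms ℋ(n). Then for every n ≥ 2 and every x ∈ ℝ, P'(x,n) = n P(x,n−1) + ℋ(n) A* ℋ(n−2)⁻¹ P(x,n−2); i.e. the differential operator ∂_x belongs to the right Fourier algebra and the coefficient M_{−2}(n) in the relation P'(x,n) = nP(x,n−1) + M_{−2}(n)P(x,n−2) equals ℋ(n)A*ℋ(n−2)⁻¹. -/

import Mathlib

open MeasureTheory Matrix Finset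
open scoped ComplexOrder

/-- The physicists' Hermite polynomials, as functions on `ℝ`:
`H_0 = 1`, `H_1(x) = 2x`, `H_{m+1}(x) = 2x H_m(x) − 2m H_{m−1}(x)`. -/
noncomputable def hermiteF : ℕ → ℝ → ℝ
  | 0, _ => 1
  | 1, x => 2 * x
  | (m + 2), x => 2 * x * hermiteF (m + 1) x - 2 * (m + 1) * hermiteF m x

/-- Entrywise integral of a matrix-valued function on `ℝ`. -/
noncomputable def matInt (N : ℕ) (F : ℝ → Matrix (Fin N) (Fin N) ℂ) :
    Matrix (Fin N) (Fin N) ℂ :=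
  Matrix.of fun i j => ∫ y : ℝ, F y i j

/-- Entrywise derivative of a matrix-valued function on `ℝ`. -/
noncomputable def matDeriv (N : ℕ) (F : ℝ → Matrix (Fin N) (Fin N) ℂ) (x : ℝ) :
    Matrix (Fin N) (Fin N) ℂ :=
  Matrix.of fun i j => deriv (fun y => F y i j) x

/-- `F` is a matrix polynomial of degree `n` with leading coefficient the identity. -/
def IsMonicMatPoly (N n : ℕ) (F : ℝ → Matrix (Fin N) (Fin N) ℂ) : Prop :=
  ∃ c : ℕ → Matrix (Fin N) (Fin N) ℂ, c n = 1 ∧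
    ∀ x : ℝ, F x = ∑ k ∈ Finset.range (n + 1), ((x : ℂ) ^ k) • c k

/-- The matrix-valued inner product `⟨H, G⟩ = ∫ H(y) W(y) G(y)* dy`. -/
noncomputable def matIP (N : ℕ) (W H G : ℝ → Matrix (Fin N) (Fin N) ℂ) :
    Matrix (Fin N) (Fin N) ℂ :=
  matInt N fun y => H y * W y * (G y)ᴴ

/-- The lower triangular matrix `L(x)` with entries
`L(x)_{jk} = (H_{j−k}(x)/(j−k)!)·(α_j/α_k)` for `j ≥ k` (here `0`-based indices). -/
noncomputable def Lmat (N : ℕ) (α : Fin N → ℝ) (x : ℝ) : Matrix (Fin N) (Fin N) ℂ :=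
  Matrix.of fun j k =>
    if (k : ℕ) ≤ (j : ℕ) then
      ((hermiteF ((j : ℕ) - (k : ℕ)) x / Nat.factorial ((j : ℕ) - (k : ℕ)) *
          (α j / α k) : ℝ) : ℂ)
    else 0

/-- The Hermite-type matrix weight `W(x) = e^{−x²} L(x)L(x)*`. -/
noncomputable def hermW (N : ℕ) (α : Fin N → ℝ) (x : ℝ) : Matrix (Fin N) (Fin N) ℂ :=
  Real.exp (-x ^ 2) • (Lmat N α x * (Lmat N α x)ᴴ)

/-- The nilpotent shift matrix `A` with `A_{j,j−1} = 2α_j/α_{j−1}` (1-based), i.e.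
(0-based) `A j k = 2 α_j / α_k` when `j = k + 1`. -/
noncomputable def Amat (N : ℕ) (α : Fin N → ℝ) : Matrix (Fin N) (Fin N) ℂ :=
  Matrix.of fun j k => if (j : ℕ) = (k : ℕ) + 1 then ((2 * α j / α k : ℝ) : ℂ) else 0

/-- The diagonal matrix `J = diag(1, 2, …, N)`. -/
def Jmat (N : ℕ) : Matrix (Fin N) (Fin N) ℂ :=
  Matrix.diagonal fun j => ((j : ℕ) + 1 : ℂ)

/-!
The matrix `L(x) = exp (x A - A² / 4)` satisfies `L' = A L`, and for the special parameters `A`,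
`A*` and `[A, A*]` span a copy of `sl₂`, so that `L A* L⁻¹` is a polynomial of degree two in `x`.
Hence `W` satisfies a Pearson equation `W' = W Ψ*` with `Ψ` a polynomial of degree two and leading
coefficient `-A`. Integration by parts then moves the derivative in `⟨P'(·,n), P(·,k)⟩` onto
`P(·,k)`, at the cost of raising the degree by two: the component of `P'(·,n)` along `P(·,k)`
vanishes for `k < n - 2`, and for `k = n - 2` it only involves the leading coefficient of `Ψ`.
-/

section OrthogonalPolynomials

open Polynomial

section

variable {R : Type*} [Ring R] {p Ψ : R[X]} {k d : ℕ}

lemma natDegree_mul_add_derivative_le (hp : p.natDegree ≤ k) (hΨ : Ψ.natDegree ≤ d) :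
    (p * Ψ + derivative p).natDegree ≤ k + d := by
  refine natDegree_add_le_of_degree_le (natDegree_mul_le_of_le hp hΨ) ?_
  exact (natDegree_derivative_le p).trans (by omega)

lemma coeff_mul_add_derivative (hp : p.natDegree ≤ k) (hΨ : Ψ.natDegree ≤ d) :
    (p * Ψ + derivative p).coeff (k + d) = p.coeff k * Ψ.coeff d := by
  have hder : (derivative p).coeff (k + d) = 0 := by
    rw [coeff_derivative, coeff_eq_zero_of_natDegree_lt (by omega), zero_mul]
  rw [coeff_add, coeff_mul_add_eq_of_natDegree_le hp hΨ, hder, add_zero]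

end

/-- An `R`-valued sesquilinear form on `R[X]`: left linear in the first argument, and
`S p (a • q) = S p q * star a` in the second. The latter is semilinearity along
`star : R ≃+* Rᵐᵒᵖ` for the action of `Rᵐᵒᵖ` on `R` by right multiplication. -/
abbrev PolynomialSesqForm (R : Type*) [Ring R] [StarRing R] :=
  R[X] →ₗ[R] R[X] →ₛₗ[((starRingEquiv : R ≃+* Rᵐᵒᵖ) : R →+* Rᵐᵒᵖ)] R

variable {R : Type*} [Ring R] [StarRing R]

/-- A sequence of monic polynomials, one in each degree, which are pairwise orthogonal for the
form `S`. -/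
structure IsMonicOrthogonal (S : PolynomialSesqForm R) (P : Sequence R) : Prop where
  monic : ∀ n, (P n).Monic
  orthogonal : ∀ n m, n ≠ m → S (P n) (P m) = 0

namespace IsMonicOrthogonal

variable {S : PolynomialSesqForm R} {P : Sequence R}

lemma coeff_self (h : IsMonicOrthogonal S P) (n : ℕ) : (P n).coeff n = 1 := by
  simpa [P.natDegree_eq] using (h.monic n).coeff_natDegree

lemma span_degreeLT (h : IsMonicOrthogonal S P) (n : ℕ) :
    Submodule.span R (P '' Set.Iio n) = degreeLT R n :=
  P.span_degreeLT fun i _ => by simp [(h.monic i).leadingCoeff]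

lemma form_left_eq_zero (h : IsMonicOrthogonal S P) {n : ℕ} {q : R[X]} (hq : q.degree < n) :
    S (P n) q = 0 := by
  have hker : degreeLT R n ≤ LinearMap.ker (S (P n)) := by
    rw [← h.span_degreeLT, Submodule.span_le]
    rintro _ ⟨k, hk, rfl⟩
    exact h.orthogonal n k (Set.mem_Iio.1 hk).ne'
  exact hker (mem_degreeLT.2 hq)

lemma form_right_eq_zero (h : IsMonicOrthogonal S P) {n : ℕ} {q : R[X]} (hq : q.degree < n) :
    S q (P n) = 0 := by
  have hker : degreeLT R n ≤ LinearMap.ker (S.flip (P n)) := by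
    rw [← h.span_degreeLT, Submodule.span_le]
    rintro _ ⟨k, hk, rfl⟩
    exact h.orthogonal k n (Set.mem_Iio.1 hk).ne
  exact hker (mem_degreeLT.2 hq)

lemma degree_sub_smul_lt (h : IsMonicOrthogonal S P) {n : ℕ} {q : R[X]}
    (hq : q.natDegree ≤ n) : (q - q.coeff n • P n).degree < n := by
  refine (degree_lt_iff_coeff_zero _ _).2 fun m hm => ?_
  rcases hm.eq_or_lt with rfl | hm
  · simp [h.coeff_self]
  · simp [coeff_eq_zero_of_natDegree_lt (hq.trans_lt hm),
      coeff_eq_zero_of_natDegree_lt ((P.natDegree_eq n).trans_lt hm)]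

lemma form_left_eq_mul_star_coeff (h : IsMonicOrthogonal S P) {n : ℕ} {q : R[X]}
    (hq : q.natDegree ≤ n) : S (P n) q = S (P n) (P n) * star (q.coeff n) := by
  have hzero := h.form_left_eq_zero (h.degree_sub_smul_lt hq)
  rwa [map_sub, map_smulₛₗ, sub_eq_zero] at hzero

lemma form_right_eq_coeff_mul (h : IsMonicOrthogonal S P) {n : ℕ} {q : R[X]}
    (hq : q.natDegree ≤ n) : S q (P n) = q.coeff n * S (P n) (P n) := by
  have hzero := h.form_right_eq_zero (h.degree_sub_smul_lt hq)
  rwa [map_sub, map_smul, LinearMap.sub_apply, LinearMap.smul_apply, sub_eq_zero] at hzero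

lemma eq_zero_of_form_eq_zero (h : IsMonicOrthogonal S P) (hS : ∀ n, IsUnit (S (P n) (P n)))
    {n : ℕ} {q : R[X]} (hq : q.degree < n) (hqP : ∀ k < n, S q (P k) = 0) : q = 0 := by
  by_contra hne
  have hlead := hqP _ ((natDegree_lt_iff_degree_lt hne).2 hq)
  rw [h.form_right_eq_coeff_mul le_rfl, (hS _).mul_left_eq_zero] at hlead
  exact hne (leadingCoeff_eq_zero.1 hlead)

lemma degree_derivative_sub_smul_lt (h : IsMonicOrthogonal S P) (n : ℕ) :
    (derivative (P (n + 1)) - ((n + 1 : ℕ) : R) • P n).degree < (n : ℕ) := by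
  have hcoeff : (derivative (P (n + 1))).coeff n = ((n + 1 : ℕ) : R) := by
    simp [coeff_derivative, h.coeff_self]
  have hdeg : (derivative (P (n + 1))).natDegree ≤ n :=
    (natDegree_derivative_le _).trans (by simp [P.natDegree_eq])
  simpa only [hcoeff] using h.degree_sub_smul_lt hdeg

variable {Ψ : R[X]} {d : ℕ}

lemma form_derivative_eq_zero (h : IsMonicOrthogonal S P) (hΨ : Ψ.natDegree ≤ d)
    (hparts : ∀ p q, S (derivative p) q = -S p (q * Ψ + derivative q)) {k n : ℕ} (hk : k + d < n) :
    S (derivative (P n)) (P k) = 0 := by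
  rw [hparts, h.form_left_eq_zero, neg_zero]
  exact degree_le_natDegree.trans_lt (Nat.cast_lt.2
    ((natDegree_mul_add_derivative_le (P.natDegree_eq k).le hΨ).trans_lt hk))

lemma form_derivative_add (h : IsMonicOrthogonal S P) (hΨ : Ψ.natDegree ≤ d)
    (hparts : ∀ p q, S (derivative p) q = -S p (q * Ψ + derivative q)) (n : ℕ) :
    S (derivative (P (n + d))) (P n) = S (P (n + d)) (P (n + d)) * star (-Ψ.coeff d) := by
  have hP := (P.natDegree_eq n).le
  rw [hparts, h.form_left_eq_mul_star_coeff (natDegree_mul_add_derivative_le hP hΨ),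
    coeff_mul_add_derivative hP hΨ, h.coeff_self, one_mul, star_neg, mul_neg]

theorem derivative_eq (h : IsMonicOrthogonal S P) (hS : ∀ n, IsUnit (S (P n) (P n)))
    (hΨ : Ψ.natDegree ≤ 2)
    (hparts : ∀ p q, S (derivative p) q = -S p (q * Ψ + derivative q)) (n : ℕ) :
    derivative (P (n + 2)) = ((n + 2 : ℕ) : R) • P (n + 1) +
      (S (P (n + 2)) (P (n + 2)) * star (-Ψ.coeff 2) * Ring.inverse (S (P n) (P n))) • P n := by
  set M := S (P (n + 2)) (P (n + 2)) * star (-Ψ.coeff 2) * Ring.inverse (S (P n) (P n)) with hM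
  rw [← sub_eq_zero, ← sub_sub]
  refine h.eq_zero_of_form_eq_zero hS (n := n + 1) ?_ fun k hk => ?_
  · refine (degree_sub_le _ _).trans_lt (max_lt (h.degree_derivative_sub_smul_lt (n + 1)) ?_)
    refine (degree_smul_le _ _).trans_lt ?_
    rw [P.degree_eq]
    exact Nat.cast_lt.2 n.lt_succ_self
  · simp only [map_sub, map_smul, LinearMap.sub_apply, LinearMap.smul_apply, smul_eq_mul,
      h.orthogonal (n + 1) k hk.ne', mul_zero, sub_zero]
    rcases (Nat.lt_succ_iff.1 hk).eq_or_lt with rfl | hk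
    · rw [h.form_derivative_add hΨ hparts, hM, Ring.inverse_mul_cancel_right _ _ (hS k), sub_self]
    · rw [h.form_derivative_eq_zero hΨ hparts (by omega), h.orthogonal n k hk.ne', mul_zero,
        sub_zero]

end IsMonicOrthogonal

end OrthogonalPolynomials

section EvalReal

open Polynomial

/-- Evaluation of a polynomial over an `ℝ`-algebra at a real point. Real scalars are central, so
this is a ring homomorphism even though the coefficients need not commute. -/
noncomputable def evalReal {E : Type*} [Ring E] [Algebra ℝ E] (x : ℝ) : E[X] →+* E :=
  eval₂RingHom' (RingHom.id E) (algebraMap ℝ E x) fun a => (Algebra.commutes x a).symm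

section Algebra

variable {E : Type*} [Ring E] [Algebra ℝ E]

@[simp]
lemma evalReal_C (x : ℝ) (a : E) : evalReal x (C a) = a :=
  eval₂_C _ _

@[simp]
lemma evalReal_X (x : ℝ) : evalReal x (X : E[X]) = algebraMap ℝ E x :=
  eval₂_X _ _

@[simp]
lemma evalReal_monomial (x : ℝ) (n : ℕ) (a : E) : evalReal x (monomial n a) = x ^ n • a := by
  refine (eval₂_monomial _ _).trans ?_
  rw [RingHom.id_apply, ← map_pow, ← Algebra.commutes, Algebra.smul_def]

@[simp]
lemma evalReal_smul (x : ℝ) (a : E) (p : E[X]) : evalReal x (a • p) = a * evalReal x p := by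
  rw [smul_eq_C_mul, map_mul, evalReal_C]

@[simp]
lemma evalReal_map_algebraMap (x : ℝ) (p : ℝ[X]) :
    evalReal x (p.map (algebraMap ℝ E)) = algebraMap ℝ E (p.eval x) := by
  refine (eval₂_map _ _ _).trans ?_
  rw [RingHom.id_comp, eval₂_at_apply]

end Algebra

section Normed

variable {E : Type*} [NormedRing E] [NormedAlgebra ℝ E]

lemma hasDerivAt_evalReal (p : E[X]) (x : ℝ) :
    HasDerivAt (fun y => evalReal y p) (evalReal x (derivative p)) x := by
  induction p using Polynomial.induction_on' with
  | add p q hp hq => simpa only [map_add] using hp.fun_add hq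
  | monomial n a =>
    simp only [derivative_monomial, evalReal_monomial]
    refine ((hasDerivAt_pow n x).smul_const a).congr_deriv ?_
    rw [mul_comm, mul_smul, Nat.cast_smul_eq_nsmul, nsmul_eq_mul, (Nat.cast_commute n a).eq]

end Normed

end EvalReal

section Weight

open Polynomial

variable {E : Type*} [NormedRing E] [NormedAlgebra ℝ E] {W : ℝ → E} {μ : Measure ℝ}

/-- All moments `∫ x ^ k W(x) dμ` of the algebra-valued weight `W` converge absolutely. -/
def HasFiniteMoments (W : ℝ → E) (μ : Measure ℝ) : Prop :=
  ∀ k : ℕ, Integrable (fun x => x ^ k • W x) μ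

namespace HasFiniteMoments

lemma evalReal_mul (hW : HasFiniteMoments W μ) (p : E[X]) :
    HasFiniteMoments (fun x => evalReal x p * W x) μ := by
  intro k
  induction p using Polynomial.induction_on' with
  | add p q hp hq =>
    simp only [map_add, add_mul, smul_add]
    exact hp.add hq
  | monomial n a =>
    simpa only [evalReal_monomial, smul_mul_assoc, mul_smul_comm, smul_smul, ← pow_add] using
      (hW (k + n)).const_mul a

variable [StarRing E] [StarModule ℝ E]

lemma mul_star_evalReal (hW : HasFiniteMoments W μ) (p : E[X]) :
    HasFiniteMoments (fun x => W x * star (evalReal x p)) μ := by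
  intro k
  induction p using Polynomial.induction_on' with
  | add p q hp hq =>
    simp only [map_add, star_add, mul_add, smul_add]
    exact hp.add hq
  | monomial n a =>
    simpa only [evalReal_monomial, star_smul, star_trivial, smul_mul_assoc, mul_smul_comm,
      smul_smul, ← pow_add] using (hW (k + n)).mul_const (star a)

lemma integrable_mul_mul_star (hW : HasFiniteMoments W μ) (p q : E[X]) :
    Integrable (fun x => evalReal x p * W x * star (evalReal x q)) μ := by
  simpa using (hW.evalReal_mul p).mul_star_evalReal q 0

/-- The sesquilinear form `(p, q) ↦ ∫ p(x) W(x) q(x)* dμ` of a weight `W`. -/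
noncomputable def form (hW : HasFiniteMoments W μ) : PolynomialSesqForm E :=
  LinearMap.mk₂'ₛₗ _ _ (fun p q => ∫ x, evalReal x p * W x * star (evalReal x q) ∂μ)
    (fun p p' q => by
      simp only [map_add, add_mul]
      exact integral_add (hW.integrable_mul_mul_star p q) (hW.integrable_mul_mul_star p' q))
    (fun a p q => by
      simp only [evalReal_smul, mul_assoc a]
      exact integral_const_mul_of_integrable (hW.integrable_mul_mul_star p q))
    (fun p q q' => by
      simp only [map_add, star_add, mul_add]
      exact integral_add (hW.integrable_mul_mul_star p q) (hW.integrable_mul_mul_star p q'))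
    (fun a p q => by
      simp only [evalReal_smul, star_mul, ← mul_assoc]
      exact integral_mul_const_of_integrable (hW.integrable_mul_mul_star p q))

lemma form_apply (hW : HasFiniteMoments W μ) (p q : E[X]) :
    hW.form p q = ∫ x, evalReal x p * W x * star (evalReal x q) ∂μ :=
  rfl

lemma form_derivative_left [ContinuousStar E] (hW : HasFiniteMoments W volume) {Ψ : E[X]}
    (hΨ : ∀ x, HasDerivAt W (W x * star (evalReal x Ψ)) x) (p q : E[X]) :
    hW.form (derivative p) q = -hW.form p (q * Ψ + derivative q) := by
  have hderiv : ∀ x, HasDerivAt (fun y => evalReal y p * W y * star (evalReal y q))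
      (evalReal x (derivative p) * W x * star (evalReal x q) +
        evalReal x p * W x * star (evalReal x (q * Ψ + derivative q))) x := fun x => by
    refine (((hasDerivAt_evalReal p x).mul (hΨ x)).mul
      (hasDerivAt_evalReal q x).star).congr_deriv ?_
    simp only [Pi.mul_apply, map_add, map_mul, star_add, star_mul, mul_add, add_mul, mul_assoc,
      add_assoc]
  have hparts := integral_eq_zero_of_hasDerivAt_of_integrable hderiv
    ((hW.integrable_mul_mul_star _ _).add (hW.integrable_mul_mul_star _ _))
    (hW.integrable_mul_mul_star p q)
  rw [integral_add (hW.integrable_mul_mul_star _ _) (hW.integrable_mul_mul_star _ _)] at hparts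
  exact eq_neg_of_add_eq_zero_left hparts

end HasFiniteMoments

end Weight

section MatrixWeight

open Polynomial
-- This choice of norm makes matrices a normed algebra with continuous `star`.
open scoped Matrix.Norms.L2Operator

variable {N : ℕ}

lemma matInt_eq_integral {F : ℝ → Matrix (Fin N) (Fin N) ℂ} (hF : Integrable F) :
    matInt N F = ∫ x, F x := by
  ext i j
  exact ((entryLinearMap ℝ ℂ i j).toContinuousLinearMap.integral_comp_comm hF)

lemma matDeriv_eq_of_hasDerivAt {F : ℝ → Matrix (Fin N) (Fin N) ℂ}
    {F' : Matrix (Fin N) (Fin N) ℂ} {x : ℝ} (hF : HasDerivAt F F' x) : matDeriv N F x = F' := by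
  ext i j
  exact ((entryLinearMap ℝ ℂ i j).toContinuousLinearMap.hasFDerivAt.comp_hasDerivAt x hF).deriv

lemma HasFiniteMoments.form_eq_matIP {W : ℝ → Matrix (Fin N) (Fin N) ℂ}
    (hW : HasFiniteMoments W volume) (p q : (Matrix (Fin N) (Fin N) ℂ)[X]) :
    hW.form p q = matIP N W (evalReal · p) (evalReal · q) :=
  (matInt_eq_integral (hW.integrable_mul_mul_star p q)).symm

lemma IsMonicMatPoly.exists_polynomial [NeZero N] {n : ℕ} {F : ℝ → Matrix (Fin N) (Fin N) ℂ}
    (hF : IsMonicMatPoly N n F) :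
    ∃ p : (Matrix (Fin N) (Fin N) ℂ)[X], p.Monic ∧ p.degree = n ∧ F = (evalReal · p) := by
  obtain ⟨c, hc, hF⟩ := hF
  have hlow : (∑ k ∈ range n, monomial k (c k)).degree < n :=
    (degree_sum_le _ _).trans_lt <| (Finset.sup_lt_iff (WithBot.bot_lt_coe n)).2 fun k hk =>
      (degree_monomial_le _ _).trans_lt (Nat.cast_lt.2 (mem_range.1 hk))
  refine ⟨X ^ n + ∑ k ∈ range n, monomial k (c k), monic_X_pow_add hlow, ?_, ?_⟩
  · rw [degree_add_eq_left_of_degree_lt (by rwa [degree_X_pow]), degree_X_pow]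
  · funext x
    rw [hF, sum_range_succ, hc, X_pow_eq_monomial, add_comm]
    simp only [map_add, map_sum, evalReal_monomial, ← Complex.ofReal_pow, Complex.coe_smul]

lemma exists_sequence_of_isMonicMatPoly [NeZero N] {P : ℕ → ℝ → Matrix (Fin N) (Fin N) ℂ}
    (hP : ∀ n, IsMonicMatPoly N n (P n)) :
    ∃ Q : Sequence (Matrix (Fin N) (Fin N) ℂ),
      (∀ n, (Q n).Monic) ∧ ∀ n, P n = (evalReal · (Q n)) := by
  choose q hmonic hdeg heval using fun n => (hP n).exists_polynomial
  exact ⟨⟨q, hdeg⟩, hmonic, heval⟩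

theorem hermite_pearson_lowering_general [NeZero N] {W : ℝ → Matrix (Fin N) (Fin N) ℂ}
    (hW : HasFiniteMoments W volume) {Ψ : (Matrix (Fin N) (Fin N) ℂ)[X]} (hΨ : Ψ.natDegree ≤ 2)
    (hpearson : ∀ x, HasDerivAt W (W x * (evalReal x Ψ)ᴴ) x)
    {P : ℕ → ℝ → Matrix (Fin N) (Fin N) ℂ} (hPmonic : ∀ n, IsMonicMatPoly N n (P n))
    (hPorth : ∀ n m, n ≠ m → matIP N W (P n) (P m) = 0)
    (hPunit : ∀ n, IsUnit (matIP N W (P n) (P n))) (n : ℕ) (hn : 2 ≤ n) (x : ℝ) :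
    matDeriv N (P n) x =
      (n : ℂ) • P (n - 1) x +
        matIP N W (P n) (P n) * (-Ψ.coeff 2)ᴴ *
          (matIP N W (P (n - 2)) (P (n - 2)))⁻¹ * P (n - 2) x := by
  obtain ⟨Q, hQmonic, hPQ⟩ := exists_sequence_of_isMonicMatPoly hPmonic
  have hform : ∀ n m, hW.form (Q n) (Q m) = matIP N W (P n) (P m) := fun n m => by
    rw [hW.form_eq_matIP, hPQ, hPQ]
  have hQ : IsMonicOrthogonal hW.form Q := ⟨hQmonic, fun n m h => (hform n m).trans (hPorth n m h)⟩
  have heval : ∀ n, evalReal x (Q n) = P n x := fun n => (congrFun (hPQ n) x).symm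
  obtain ⟨n, rfl⟩ := Nat.exists_eq_add_of_le' hn
  have hderiv := hQ.derivative_eq (fun n => hform n n ▸ hPunit n) hΨ
    (hW.form_derivative_left hpearson) n
  rw [hPQ (n + 2), matDeriv_eq_of_hasDerivAt (hasDerivAt_evalReal (Q (n + 2)) x), hderiv, ← hPQ,
    map_add, evalReal_smul, evalReal_smul, heval, heval, hform, hform, Nat.cast_smul_eq_nsmul,
    nsmul_eq_mul, nonsing_inv_eq_ringInverse]
  rfl

end MatrixWeight

section Hermite

open Polynomial

lemma hermiteF_succ (m : ℕ) (x : ℝ) :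
    hermiteF (m + 1) x = 2 * x * hermiteF m x - 2 * m * hermiteF (m - 1) x := by
  cases m with
  | zero => simp [hermiteF]
  | succ m => simp [hermiteF]

lemma hasDerivAt_hermiteF (m : ℕ) (x : ℝ) :
    HasDerivAt (hermiteF m) (2 * m * hermiteF (m - 1) x) x := by
  induction m using Nat.strong_induction_on with
  | _ m ih =>
    match m, ih with
    | 0, _ => simpa [hermiteF] using hasDerivAt_const x (1 : ℝ)
    | 1, _ => simpa [hermiteF] using (hasDerivAt_id x).const_mul 2
    | m + 2, ih =>
      have hx : HasDerivAt (fun y : ℝ => 2 * y) 2 x := by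
        simpa using (hasDerivAt_id x).const_mul 2
      refine ((hx.mul (ih (m + 1) (by omega))).sub
        ((ih m (by omega)).const_mul (2 * (m + 1 : ℝ)))).congr_deriv ?_
      push_cast [Nat.add_sub_cancel, show m + 2 - 1 = m + 1 from rfl]
      rw [hermiteF_succ m]
      ring

lemma exists_polynomial_hermiteF (m : ℕ) : ∃ p : ℝ[X], ∀ x, p.eval x = hermiteF m x := by
  induction m using Nat.twoStepInduction with
  | zero => exact ⟨1, by simp [hermiteF]⟩
  | one => exact ⟨C 2 * X, by simp [hermiteF]⟩
  | more m hm hm' =>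
    obtain ⟨p, hp⟩ := hm
    obtain ⟨q, hq⟩ := hm'
    exact ⟨C 2 * X * q - C (2 * (m + 1 : ℝ)) * p, fun x => by simp [hp, hq, hermiteF]⟩

/-- The coefficient `H_m(x) / (m! 2 ^ m)` of `t ^ m` in `exp (x t - t ^ 2 / 4)`. -/
noncomputable def hermiteCoeff (m : ℕ) (x : ℝ) : ℝ :=
  hermiteF m x / (m.factorial * 2 ^ m)

lemma succ_mul_hermiteCoeff_add_two (m : ℕ) (x : ℝ) :
    (m + 2) * hermiteCoeff (m + 2) x = x * hermiteCoeff (m + 1) x - hermiteCoeff m x / 2 := by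
  have hfac : ((m.factorial : ℕ) : ℝ) ≠ 0 := by exact_mod_cast m.factorial_ne_zero
  simp only [hermiteCoeff, hermiteF, Nat.factorial_succ]
  push_cast
  field_simp
  ring

lemma hasDerivAt_hermiteCoeff_succ (m : ℕ) (x : ℝ) :
    HasDerivAt (hermiteCoeff (m + 1)) (hermiteCoeff m x) x := by
  have hfac : ((m.factorial : ℕ) : ℝ) ≠ 0 := by exact_mod_cast m.factorial_ne_zero
  refine ((hasDerivAt_hermiteF (m + 1) x).div_const _).congr_deriv ?_
  simp only [hermiteCoeff, Nat.add_sub_cancel, Nat.factorial_succ]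
  push_cast
  field_simp
  ring

/-- The Taylor polynomial of `exp (x t - t ^ 2 / 4)` in `t`, truncated to degree less than `M`. -/
noncomputable def hermiteGen (M : ℕ) (x : ℝ) : ℝ[X] :=
  ∑ m ∈ range M, monomial m (hermiteCoeff m x)

lemma derivative_hermiteGen (M : ℕ) (x : ℝ) :
    derivative (hermiteGen (M + 2) x) =
      C x * hermiteGen (M + 1) x - C (1 / 2) * X * hermiteGen M x := by
  induction M with
  | zero => simp [hermiteGen, sum_range_succ, hermiteCoeff, hermiteF]
  | succ M ih =>
    have hterm : derivative (monomial (M + 2) (hermiteCoeff (M + 2) x)) =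
        C x * monomial (M + 1) (hermiteCoeff (M + 1) x) -
          C (1 / 2) * X * monomial M (hermiteCoeff M x) := by
      rw [derivative_monomial, mul_assoc, X_mul_monomial, C_mul_monomial, C_mul_monomial,
        ← monomial_sub]
      push_cast
      rw [mul_comm, succ_mul_hermiteCoeff_add_two]
      congr 1
      ring
    simp only [hermiteGen] at ih ⊢
    rw [sum_range_succ _ (M + 2), derivative_add, ih, hterm, sum_range_succ _ (M + 1),
      sum_range_succ _ M]
    ring

section Nilpotent

variable {E : Type*} [Ring E] [Algebra ℝ E] {A : E} {K : ℕ}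

lemma aeval_hermiteGen (A : E) (M : ℕ) (x : ℝ) :
    aeval A (hermiteGen M x) = ∑ m ∈ range M, hermiteCoeff m x • A ^ m := by
  simp [hermiteGen, aeval_monomial, Algebra.smul_def]

lemma aeval_hermiteGen_of_le (hA : A ^ K = 0) {M : ℕ} (hM : K ≤ M) (x : ℝ) :
    aeval A (hermiteGen M x) = aeval A (hermiteGen K x) := by
  rw [aeval_hermiteGen, aeval_hermiteGen]
  refine (sum_subset (range_subset_range.2 hM) fun m _ hm => ?_).symm
  rw [pow_eq_zero_of_le (not_lt.1 fun h => hm (mem_range.2 h)) hA, smul_zero]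

lemma aeval_derivative_hermiteGen (hA : A ^ K = 0) {M : ℕ} (hM : K ≤ M) (x : ℝ) :
    aeval A (derivative (hermiteGen (M + 2) x)) =
      aeval A (C x - C (1 / 2) * X : ℝ[X]) * aeval A (hermiteGen K x) := by
  rw [derivative_hermiteGen, map_sub, map_mul, map_mul, aeval_hermiteGen_of_le hA hM,
    aeval_hermiteGen_of_le hA (by omega), ← sub_mul, ← map_sub]

lemma aeval_derivative_derivative_hermiteGen (hA : A ^ K = 0) {M : ℕ} (hM : K ≤ M) (x : ℝ) :
    aeval A (derivative (derivative (hermiteGen (M + 4) x))) =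
      aeval A ((C x - C (1 / 2) * X) ^ 2 - C (1 / 2) : ℝ[X]) * aeval A (hermiteGen K x) := by
  rw [derivative_hermiteGen]
  simp only [derivative_mul, derivative_C, derivative_X, zero_mul, zero_add,
    mul_one, map_sub, map_add, map_mul, aeval_derivative_hermiteGen hA hM,
    aeval_derivative_hermiteGen hA (show K ≤ M + 1 by omega),
    aeval_hermiteGen_of_le hA (show K ≤ M + 2 by omega)]
  simp only [← map_mul, ← map_sub, ← map_add, ← mul_assoc, ← sub_mul, ← add_mul]
  congr 2
  ring

lemma exists_polynomial_aeval_hermiteGen (A : E) (K : ℕ) :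
    ∃ p : E[X], ∀ x, evalReal x p = aeval A (hermiteGen K x) := by
  choose H hH using exists_polynomial_hermiteF
  refine ⟨∑ m ∈ range K, (H m).map (algebraMap ℝ E) * C ((m.factorial * 2 ^ m : ℝ)⁻¹ • A ^ m),
    fun x => ?_⟩
  simp only [map_sum, map_mul, evalReal_map_algebraMap, evalReal_C, hH, aeval_hermiteGen]
  refine sum_congr rfl fun m _ => ?_
  rw [← Algebra.smul_def, smul_smul, hermiteCoeff, div_eq_mul_inv]

end Nilpotent

lemma hasDerivAt_aeval_hermiteGen {E : Type*} [NormedRing E] [NormedAlgebra ℝ E] {A : E} {K : ℕ}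
    (hA : A ^ K = 0) (x : ℝ) :
    HasDerivAt (fun y => aeval A (hermiteGen K y)) (A * aeval A (hermiteGen K x)) x := by
  have hterm : ∀ m, HasDerivAt (fun y => hermiteCoeff (m + 1) y • A ^ (m + 1))
      (A * hermiteCoeff m x • A ^ m) x := fun m => by
    simpa only [mul_smul_comm, ← pow_succ'] using
      (hasDerivAt_hermiteCoeff_succ m x).smul_const (A ^ (m + 1))
  have hconst : HasDerivAt (fun y => hermiteCoeff 0 y • A ^ 0) 0 x := by
    simpa [hermiteCoeff, hermiteF] using hasDerivAt_const x (1 : E)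
  have hL : ∀ y, aeval A (hermiteGen K y) =
      ∑ m ∈ range K, hermiteCoeff (m + 1) y • A ^ (m + 1) + hermiteCoeff 0 y • A ^ 0 := fun y => by
    rw [← aeval_hermiteGen_of_le hA K.le_succ, aeval_hermiteGen, sum_range_succ']
  rw [funext hL, aeval_hermiteGen, mul_sum]
  simpa only [add_zero] using (HasDerivAt.fun_sum fun m _ => hterm m).fun_add hconst

end Hermite

section SlTwo

open Polynomial

variable {K E : Type*} [CommRing K] [Ring E] [Algebra K E] {A B : E}

/-- The expansion of `f(A) B` in iterated commutators of `A` and `B` stops at second order because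
`⁅A, ⁅A, B⁆⁆` is a multiple of `A`. -/
lemma aeval_mul_of_lie_lie_eq (h : ⁅⁅A, B⁆, A⁆ = 2 • A) (f : K[X]) :
    aeval A f * B = B * aeval A f + ⁅A, B⁆ * aeval A (derivative f) -
      A * aeval A (derivative (derivative f)) := by
  induction f using Polynomial.induction_on with
  | C a => simp [Algebra.commutes]
  | add p q hp hq =>
    simp only [map_add, add_mul, mul_add, hp, hq]
    abel
  | monomial n a ih =>
    rw [pow_succ', ← mul_assoc, mul_comm (C a), mul_assoc]
    generalize C a * X ^ n = f at ih ⊢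
    have hAB : A * B = B * A + ⁅A, B⁆ := by rw [Ring.lie_def]; abel
    have hAD : A * ⁅A, B⁆ = ⁅A, B⁆ * A - 2 • A := by rw [← h, Ring.lie_def _ A]; abel
    calc aeval A (X * f) * B = A * (aeval A f * B) := by rw [map_mul, aeval_X, mul_assoc]
      _ = (A * B) * aeval A f + (A * ⁅A, B⁆) * aeval A (derivative f) -
          A * (A * aeval A (derivative (derivative f))) := by
        rw [ih]
        noncomm_ring
      _ = _ := by
        rw [hAB, hAD]
        simp only [nsmul_eq_mul, Nat.cast_ofNat, map_mul, aeval_X, derivative_mul, derivative_X,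
          one_mul, map_add]
        noncomm_ring

end SlTwo

section HermiteWeight

open Polynomial

section Algebra

variable {E : Type*} [Ring E] [StarRing E] [Algebra ℝ E]

/-- The weight `e^{-x²} L(x) L(x)*` with `L(x) = exp (x A - A ^ 2 / 4)`. The exponential is the
polynomial `hermiteGen K x` at `A`, which is only its exact value when `A ^ K = 0`. -/
noncomputable def hermiteWeight (A : E) (K : ℕ) (x : ℝ) : E :=
  Real.exp (-x ^ 2) • (aeval A (hermiteGen K x) * star (aeval A (hermiteGen K x)))

/-- The polynomial `S` for which `L(x) A* L(x)⁻¹ = S(x)`, where `L(x) = exp (x A - A ^ 2 / 4)`. -/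
noncomputable def hermiteConj (A : E) : E[X] :=
  C (star A) + C ⁅A, star A⁆ * (X - C ((1 / 2 : ℝ) • A)) -
    C A * ((X - C ((1 / 2 : ℝ) • A)) ^ 2 - C (algebraMap ℝ E (1 / 2)))

/-- The coefficient `Ψ` of the Pearson equation `W' = W Ψ*` of the weight `hermiteWeight A K`. -/
noncomputable def hermitePearson (A : E) : E[X] :=
  hermiteConj A + C A - 2 * X

lemma natDegree_hermitePearson_le (A : E) :
    (hermitePearson A).natDegree ≤ 2 := by
  unfold hermitePearson hermiteConj
  compute_degree

lemma coeff_two_hermitePearson (A : E) :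
    (hermitePearson A).coeff 2 = -A := by
  unfold hermitePearson hermiteConj
  compute_degree!

lemma aeval_hermiteGen_mul_star {A : E} {K : ℕ} (hA : A ^ K = 0)
    (hsl : ⁅⁅A, star A⁆, A⁆ = 2 • A) (x : ℝ) :
    aeval A (hermiteGen K x) * star A = evalReal x (hermiteConj A) * aeval A (hermiteGen K x) := by
  rw [← aeval_hermiteGen_of_le hA (by omega : K ≤ K + 4), aeval_mul_of_lie_lie_eq hsl,
    aeval_derivative_hermiteGen hA (by omega), aeval_derivative_derivative_hermiteGen hA le_rfl,
    aeval_hermiteGen_of_le hA (by omega : K ≤ K + 4)]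
  simp [hermiteConj, Algebra.smul_def, -one_div, sub_mul, add_mul, mul_assoc]

end Algebra

section Normed

variable {E : Type*} [NormedRing E] [StarRing E] [NormedAlgebra ℝ E] [StarModule ℝ E] {A : E}
  {K : ℕ}

lemma hasFiniteMoments_exp_neg_sq (E : Type*) [NormedRing E] [NormedAlgebra ℝ E] :
    HasFiniteMoments (fun x => Real.exp (-x ^ 2) • (1 : E)) volume := by
  intro k
  have hint := integrable_rpow_mul_exp_neg_mul_sq one_pos
    (show (-1 : ℝ) < k from neg_one_lt_zero.trans_le k.cast_nonneg)
  simpa [smul_smul] using hint.smul_const (1 : E)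

lemma hasFiniteMoments_hermiteWeight (A : E) (K : ℕ) :
    HasFiniteMoments (hermiteWeight A K) volume := by
  obtain ⟨p, hp⟩ := exists_polynomial_aeval_hermiteGen A K
  have hW := ((hasFiniteMoments_exp_neg_sq E).evalReal_mul p).mul_star_evalReal p
  simp only [hp, mul_smul_comm, mul_one, smul_mul_assoc] at hW
  exact hW

lemma hasDerivAt_hermiteWeight [ContinuousStar E] (hA : A ^ K = 0)
    (hsl : ⁅⁅A, star A⁆, A⁆ = 2 • A) (x : ℝ) :
    HasDerivAt (hermiteWeight A K)
      (hermiteWeight A K x * star (evalReal x (hermitePearson A))) x := by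
  set L := aeval A (hermiteGen K x) with hL
  set S := evalReal x (hermiteConj A) with hS
  have hexp : HasDerivAt (fun y : ℝ => Real.exp (-y ^ 2)) (-2 * x * Real.exp (-x ^ 2)) x := by
    refine ((hasDerivAt_pow 2 x).neg.exp).congr_deriv ?_
    simp only [Pi.neg_apply, Nat.cast_ofNat, Nat.add_one_sub_one, pow_one, mul_neg, neg_mul,
      neg_inj]
    ring
  have hcomm : A * L = L * A := by
    simpa using congrArg (aeval A) (mul_comm X (hermiteGen K x))
  have hconj : A * star L = star L * star S := by
    simpa using congrArg star (aeval_hermiteGen_mul_star hA hsl x)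
  have hLderiv := hasDerivAt_aeval_hermiteGen hA x
  refine (hexp.smul (hLderiv.mul hLderiv.star)).congr_deriv ?_
  calc Real.exp (-x ^ 2) • (A * L * star L + L * star (A * L)) +
        (-2 * x * Real.exp (-x ^ 2)) • (L * star L)
      = Real.exp (-x ^ 2) • (L * (A * star L) + L * star L * star A - (2 * x) • (L * star L)) := by
        rw [star_mul, hcomm, mul_assoc L A, ← mul_assoc L (star L), smul_sub, smul_smul,
          mul_comm _ (2 * x), sub_eq_add_neg, ← neg_smul, neg_mul, neg_mul]
    _ = Real.exp (-x ^ 2) • (L * star L) * star (S + A - (2 * x) • (1 : E)) := by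
        rw [hconj, smul_mul_assoc, star_sub, star_add, star_smul, star_one, star_trivial (2 * x),
          mul_sub, mul_add, mul_smul_comm, mul_one, mul_assoc L, mul_assoc L]
    _ = hermiteWeight A K x * star (evalReal x (hermitePearson A)) := by
        simp [hermiteWeight, hermitePearson, Algebra.smul_def, map_ofNat, hL, hS]

end Normed

end HermiteWeight

section Amat

variable {N : ℕ} {α : Fin N → ℝ}

lemma Amat_pow_apply (hα : ∀ j, α j ≠ 0) (m : ℕ) (j k : Fin N) :
    (Amat N α ^ m) j k = if (j : ℕ) = k + m then ((2 ^ m * (α j / α k) : ℝ) : ℂ) else 0 := by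
  induction m generalizing j with
  | zero =>
    rcases eq_or_ne j k with rfl | h
    · simp [div_self (Complex.ofReal_ne_zero.2 (hα j))]
    · simp [h, Fin.val_inj]
  | succ m ih =>
    rw [pow_succ', mul_apply]
    split_ifs with h
    · have hk : (k : ℕ) + m < N := by omega
      rw [sum_eq_single ⟨k + m, hk⟩ _ (by simp)]
      · have hm : α ⟨k + m, hk⟩ ≠ 0 := hα _
        rw [ih, if_pos rfl, Amat, of_apply, if_pos (by simpa [add_assoc] using h),
          ← Complex.ofReal_mul]
        congr 1
        field_simp
        ring
      · intro l _ hl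
        rw [ih, if_neg (fun h => hl (Fin.ext h)), mul_zero]
    · refine sum_eq_zero fun l _ => ?_
      rw [ih, Amat, of_apply]
      split_ifs <;> first | omega | simp

lemma Amat_pow_eq_zero (hα : ∀ j, α j ≠ 0) : Amat N α ^ N = 0 := by
  ext j k
  rw [Amat_pow_apply hα, if_neg (by omega), Matrix.zero_apply]

lemma Lmat_eq_aeval_hermiteGen (hα : ∀ j, α j ≠ 0) (x : ℝ) :
    Lmat N α x = Polynomial.aeval (Amat N α) (hermiteGen N x) := by
  ext j k
  simp only [aeval_hermiteGen, Matrix.sum_apply, Matrix.smul_apply, Amat_pow_apply hα, Lmat,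
    of_apply]
  split_ifs with h
  · rw [sum_eq_single_of_mem ((j : ℕ) - k) (mem_range.2 (by omega)), if_pos (by omega),
      Complex.real_smul, ← Complex.ofReal_mul, hermiteCoeff]
    · congr 1
      field_simp
    · intro m _ hm
      rw [if_neg (by omega), smul_zero]
  · refine (sum_eq_zero fun m _ => ?_).symm
    rw [if_neg (by omega), smul_zero]

lemma hermW_eq_hermiteWeight (hα : ∀ j, α j ≠ 0) : hermW N α = hermiteWeight (Amat N α) N := by
  funext x
  rw [hermW, hermiteWeight, Lmat_eq_aeval_hermiteGen hα, star_eq_conjTranspose]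

lemma Amat_apply_eq_zero {j k : Fin N} (h : (j : ℕ) ≠ k + 1) : Amat N α j k = 0 := by
  rw [Amat, of_apply, if_neg h]

lemma Amat_apply_mul_star_self
    (hsq : ∀ j k : Fin N, (j : ℕ) = k + 1 → (2 * α j / α k) ^ 2 = j * (N - j))
    {j k : Fin N} (h : (j : ℕ) = k + 1) :
    Amat N α j k * star (Amat N α j k) = (j : ℕ) * (N - (j : ℕ)) := by
  rw [Amat, of_apply, if_pos h, Complex.star_def, Complex.conj_ofReal, ← Complex.ofReal_mul, ← sq,
    hsq j k h]
  push_cast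
  rfl

lemma Amat_mul_conjTranspose
    (hsq : ∀ j k : Fin N, (j : ℕ) = k + 1 → (2 * α j / α k) ^ 2 = j * (N - j)) :
    Amat N α * (Amat N α)ᴴ = diagonal fun j : Fin N => ((j : ℕ) : ℂ) * (N - (j : ℕ)) := by
  ext i j
  simp only [mul_apply, conjTranspose_apply]
  rcases eq_or_ne i j with rfl | hij
  · rw [diagonal_apply_eq]
    rcases Nat.eq_zero_or_eq_succ_pred (i : ℕ) with hi | hi
    · rw [sum_eq_zero fun l _ => by rw [Amat_apply_eq_zero (by omega), zero_mul], hi,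
        Nat.cast_zero, zero_mul]
    · rw [sum_eq_single ⟨(i : ℕ).pred, by omega⟩ (fun l _ hl => ?_) (by simp),
        Amat_apply_mul_star_self hsq hi]
      rw [Amat_apply_eq_zero fun h => hl (Fin.ext (by simp [h])), zero_mul]
  · rw [diagonal_apply_ne _ hij]
    refine sum_eq_zero fun l _ => ?_
    by_cases hi : (i : ℕ) = l + 1
    · rw [Amat_apply_eq_zero (j := j) (by omega), star_zero, mul_zero]
    · rw [Amat_apply_eq_zero hi, zero_mul]

lemma conjTranspose_mul_Amat
    (hsq : ∀ j k : Fin N, (j : ℕ) = k + 1 → (2 * α j / α k) ^ 2 = j * (N - j)) :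
    (Amat N α)ᴴ * Amat N α =
      diagonal fun j : Fin N => (((j : ℕ) : ℂ) + 1) * (N - ((j : ℕ) + 1)) := by
  ext i j
  simp only [mul_apply, conjTranspose_apply]
  rcases eq_or_ne i j with rfl | hij
  · rw [diagonal_apply_eq]
    rcases (Nat.succ_le_of_lt i.is_lt).eq_or_lt with hi | hi
    · rw [sum_eq_zero fun l _ => by rw [Amat_apply_eq_zero (by omega), mul_zero]]
      simp [← hi]
    · rw [sum_eq_single ⟨(i : ℕ).succ, hi⟩ (fun l _ hl => ?_) (by simp), mul_comm,
        Amat_apply_mul_star_self hsq rfl]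
      · simp
      · rw [Amat_apply_eq_zero fun h => hl (Fin.ext (by simp [h])), mul_zero]
  · rw [diagonal_apply_ne _ hij]
    refine sum_eq_zero fun l _ => ?_
    by_cases hi : (l : ℕ) = i + 1
    · rw [Amat_apply_eq_zero (k := j) (by omega), mul_zero]
    · rw [Amat_apply_eq_zero hi, star_zero, zero_mul]

lemma lie_diagonal_Amat {d : Fin N → ℂ} {c : ℂ}
    (hd : ∀ j k : Fin N, (j : ℕ) = k + 1 → d j - d k = c) :
    ⁅diagonal d, Amat N α⁆ = c • Amat N α := by
  ext j k
  rw [Ring.lie_def, Matrix.sub_apply, diagonal_mul, mul_diagonal, Matrix.smul_apply, smul_eq_mul]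
  by_cases h : (j : ℕ) = k + 1
  · rw [← hd j k h]
    ring
  · simp [Amat, h]

lemma lie_lie_Amat_conjTranspose
    (hsq : ∀ j k : Fin N, (j : ℕ) = k + 1 → (2 * α j / α k) ^ 2 = j * (N - j)) :
    ⁅⁅Amat N α, (Amat N α)ᴴ⁆, Amat N α⁆ = 2 • Amat N α := by
  rw [Ring.lie_def (Amat N α), Amat_mul_conjTranspose hsq, conjTranspose_mul_Amat hsq, diagonal_sub,
    lie_diagonal_Amat (c := 2), ofNat_smul_eq_nsmul]
  intro j k h
  rw [h]
  push_cast
  ring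

end Amat

/-- **Extra lowering relation in the Pearson case** (Proposition 6.3 of the paper):
with the special parameters `2α_j/α_{j−1} = √((j−1)(N−j+1))`, the monic MVOPs
satisfy `P'(x,n) = nP(x,n−1) + ℋ(n)A*ℋ(n−2)⁻¹ P(x,n−2)` for `n ≥ 2`. -/
theorem hermite_pearson_lowering
    (N : ℕ) (hN : 1 ≤ N) (α : Fin N → ℝ) (hα : ∀ j, 0 < α j)
    (P : ℕ → ℝ → Matrix (Fin N) (Fin N) ℂ)
    (hPmonic : ∀ n, IsMonicMatPoly N n (P n))
    (hPorth : ∀ n m, n ≠ m → matIP N (hermW N α) (P n) (P m) = 0)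
    (hHpos : ∀ n, (matIP N (hermW N α) (P n) (P n)).PosDef)
    (hspec : ∀ j k : Fin N, (j : ℕ) = (k : ℕ) + 1 →
      2 * α j / α k = Real.sqrt ((j : ℕ) * (N - (j : ℕ))))
    :
    ∀ n : ℕ, 2 ≤ n → ∀ x : ℝ,
      matDeriv N (P n) x =
        (n : ℂ) • P (n - 1) x +
          matIP N (hermW N α) (P n) (P n) * (Amat N α)ᴴ *
            (matIP N (hermW N α) (P (n - 2)) (P (n - 2)))⁻¹ * P (n - 2) x := by
  open scoped Matrix.Norms.L2Operator in
  have : NeZero N := ⟨Nat.one_le_iff_ne_zero.1 hN⟩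
  have hα₀ : ∀ j, α j ≠ 0 := fun j => (hα j).ne'
  have hsq : ∀ j k : Fin N, (j : ℕ) = k + 1 → (2 * α j / α k) ^ 2 = j * (N - j) := fun j k h => by
    rw [hspec j k h, Real.sq_sqrt]
    exact mul_nonneg j.val.cast_nonneg (sub_nonneg.2 (Nat.cast_le.2 j.is_le'))
  have hunit : ∀ n, IsUnit (matIP N (hermW N α) (P n) (P n)) := fun n => (hHpos n).isUnit
  rw [hermW_eq_hermiteWeight hα₀] at hPorth hunit ⊢
  simpa only [coeff_two_hermitePearson, neg_neg] using hermite_pearson_lowering_general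
    (hasFiniteMoments_hermiteWeight (Amat N α) N) (natDegree_hermitePearson_le _)
    (hasDerivAt_hermiteWeight (Amat_pow_eq_zero hα₀) (lie_lie_Amat_conjTranspose hsq))
    hPmonic hPorth hunit
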